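/- arXiv:2406.19088 — 6 statements merged into one kernel-verified Lean document; each statement's English description precedes it below -/
import Mathlib

section
/- Let (Ω₁, μ₁), …, (Ω_k, μ_k) be σ-finite measure spaces, fix j ∈ {1, …, k}, and for each l let (f_n^{(l)})_{n∈ℕ} be a sequence in L²(Ω_l, μ_l) and f^{(l)} ∈ L²(Ω_l, μ_l) with f^{(l)} ≠ 0. Assume: (i) the product functions F_n(x₁,…,x_k) := ∏_{l=1}^k f_n^{(l)}(x_l) converge weakly in L²(μ₁ ⊗ ⋯ ⊗ μ_k) to F(x₁,…,x_k) := ∏_{l=1}^k f^{(l)}(x_l), i.e. ⟨F_n, G⟩ → ⟨F, G⟩ for every G ∈ L²(μ₁ ⊗ ⋯ ⊗ μ_k); and (ii) for every l ≠ j, f_n^{(l)} → f^{(l)} in L²(μ_l)-norm. Then f_n^{(j)} converges weakly to f^{(j)} in L²(Ω_j, μ_j), i.e. ⟨f_n^{(j)}, g⟩ → ⟨f^{(j)}, g⟩ for every g ∈ L²(Ω_j, μ_j). -/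
open MeasureTheory Filter

/-!
Test the product functions against pure tensors `⊗ₗ hₗ` with an arbitrary `g` in the slot `j`. By
Fubini the pairing is `⟪fₙ⁽ʲ⁾, g⟫ * ∏_{l ≠ j} ⟪fₙ⁽ˡ⁾, hₗ⟫`, and when the second factor has a nonzero
limit it can be divided out. The choice `hₗ = f⁽ˡ⁾` makes that limit `∏_{l ≠ j} ‖f⁽ˡ⁾‖² ≠ 0`.
-/

open scoped ComplexConjugate InnerProductSpace

theorem tendsto_factor_of_tendsto_prod {α ι G₀ : Type*} [Fintype ι] [CommGroupWithZero G₀]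
    [TopologicalSpace G₀] [ContinuousMul G₀] [ContinuousInv₀ G₀] [T1Space G₀] {F : Filter α}
    {a : α → ι → G₀} {A : ι → G₀} (j : ι)
    (hprod : Tendsto (fun n => ∏ l, a n l) F (nhds (∏ l, A l)))
    (hother : ∀ l, l ≠ j → Tendsto (fun n => a n l) F (nhds (A l)))
    (hA : ∀ l, l ≠ j → A l ≠ 0) : Tendsto (fun n => a n j) F (nhds (A j)) := by
  classical
  simp only [← Finset.mul_prod_erase _ _ (Finset.mem_univ j)] at hprod
  have hrest : Tendsto (fun n => ∏ l ∈ Finset.univ.erase j, a n l) F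
      (nhds (∏ l ∈ Finset.univ.erase j, A l)) :=
    tendsto_finsetProd _ fun l hl => hother l (Finset.ne_of_mem_erase hl)
  have hne : ∏ l ∈ Finset.univ.erase j, A l ≠ 0 :=
    Finset.prod_ne_zero_iff.2 fun l hl => hA l (Finset.ne_of_mem_erase hl)
  exact (tendsto_mul_iff_of_ne_zero hrest hne).1 hprod

section PureTensor

variable {ι : Type*} [Fintype ι] {Ω : ι → Type*} [∀ l, MeasurableSpace (Ω l)]
  {μ : ∀ l, Measure (Ω l)} [∀ l, SigmaFinite (μ l)]

theorem aestronglyMeasurable_pi_prod {M : Type*} [CommMonoid M] [TopologicalSpace M]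
    [ContinuousMul M] {u : ∀ l, Ω l → M} (hu : ∀ l, AEStronglyMeasurable (u l) (μ l)) :
    AEStronglyMeasurable (fun x => ∏ l, u l (x l)) (Measure.pi μ) :=
  Finset.univ.aestronglyMeasurable_fun_prod fun l _ =>
    (hu l).comp_quasiMeasurePreserving (Measure.quasiMeasurePreserving_eval μ l)

variable {R : Type*} [NormedCommRing R] [NormOneClass R] {p : ENNReal}

theorem memLp_top_pi_prod {u : ∀ l, Ω l → R} (hu : ∀ l, MemLp (u l) ⊤ (μ l)) :
    MemLp (fun x => ∏ l, u l (x l)) ⊤ (Measure.pi μ) := by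
  have hbound : ∀ᵐ x ∂Measure.pi μ, ∀ l, ‖u l (x l)‖ ≤ lpNorm (u l) ⊤ (μ l) :=
    ae_all_iff.2 fun l => (Measure.quasiMeasurePreserving_eval μ l).ae
      (ae_le_lpNorm_exponent_top (hu l))
  refine memLp_top_of_bound (aestronglyMeasurable_pi_prod fun l => (hu l).1)
    (∏ l, lpNorm (u l) ⊤ (μ l)) (hbound.mono fun x hx => ?_)
  exact (Finset.norm_prod_le _ _).trans
    (Finset.prod_le_prod (fun l _ => norm_nonneg _) fun l _ => hx l)

theorem memLp_pi_prod {u : ∀ l, Ω l → R} (hu : ∀ l, MemLp (u l) p (μ l)) :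
    MemLp (fun x => ∏ l, u l (x l)) p (Measure.pi μ) := by
  have hmeas := aestronglyMeasurable_pi_prod fun l => (hu l).1
  rcases eq_or_ne p 0 with rfl | hp0
  · exact memLp_zero_iff_aestronglyMeasurable.2 hmeas
  rcases eq_or_ne p ⊤ with rfl | hptop
  · exact memLp_top_pi_prod hu
  have hint : Integrable (fun x => ∏ l, ‖u l (x l)‖ ^ p.toReal) (Measure.pi μ) :=
    Integrable.fintype_prod_dep fun l => (hu l).integrable_norm_rpow hp0 hptop
  refine (integrable_norm_rpow_iff hmeas hp0 hptop).1 (hint.mono' ?_ (ae_of_all _ fun x => ?_))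
  · exact (hmeas.norm.aemeasurable.pow_const _).aestronglyMeasurable
  · rw [Real.norm_of_nonneg (by positivity), Real.finsetProd_rpow _ _ fun l _ => norm_nonneg _]
    gcongr
    exact Finset.norm_prod_le _ _

/-- The pure tensor `⊗ₗ uₗ`: the class in `Lᵖ` of the product measure of the function
`x ↦ ∏ₗ uₗ(xₗ)`. -/
noncomputable def lpPureTensor (u : ∀ l, Lp R p (μ l)) : Lp R p (Measure.pi μ) :=
  (memLp_pi_prod fun l => Lp.memLp (u l)).toLp

theorem coeFn_lpPureTensor (u : ∀ l, Lp R p (μ l)) :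
    lpPureTensor u =ᵐ[Measure.pi μ] fun x => ∏ l, u l (x l) :=
  MemLp.coeFn_toLp _

variable {𝕜 : Type*} [RCLike 𝕜]

theorem inner_lpPureTensor_left (u : ∀ l, Lp 𝕜 2 (μ l)) (G : Lp 𝕜 2 (Measure.pi μ)) :
    ⟪lpPureTensor u, G⟫_𝕜 = ∫ x, conj (∏ l, u l (x l)) * G x ∂Measure.pi μ := by
  rw [L2.inner_def]
  refine integral_congr_ae ((coeFn_lpPureTensor u).mono fun x hx => ?_)
  simp only [hx, RCLike.inner_apply']

theorem inner_lpPureTensor (u v : ∀ l, Lp 𝕜 2 (μ l)) :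
    ⟪lpPureTensor u, lpPureTensor v⟫_𝕜 = ∏ l, ⟪u l, v l⟫_𝕜 :=
  calc ⟪lpPureTensor u, lpPureTensor v⟫_𝕜
      = ∫ x, conj (∏ l, u l (x l)) * lpPureTensor v x ∂Measure.pi μ :=
        inner_lpPureTensor_left u _
    _ = ∫ x, ∏ l, ⟪u l (x l), v l (x l)⟫_𝕜 ∂Measure.pi μ := by
        refine integral_congr_ae ((coeFn_lpPureTensor v).mono fun x hx => ?_)
        simp only [hx, map_prod, ← Finset.prod_mul_distrib, RCLike.inner_apply']
    _ = ∏ l, ⟪u l, v l⟫_𝕜 :=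
        integral_fintype_prod_eq_prod fun l y => ⟪u l y, v l y⟫_𝕜

theorem weak_convergence_of_factor_general {α : Type*} {F : Filter α} (j : ι)
    (f : α → ∀ l, Lp 𝕜 2 (μ l)) (flim h : ∀ l, Lp 𝕜 2 (μ l))
    (hne : ∀ l, l ≠ j → ⟪flim l, h l⟫_𝕜 ≠ 0)
    (hweak : ∀ G : Lp 𝕜 2 (Measure.pi μ),
      Tendsto (fun n => ⟪lpPureTensor (f n), G⟫_𝕜) F (nhds ⟪lpPureTensor flim, G⟫_𝕜))
    (hother : ∀ l, l ≠ j → Tendsto (fun n => ⟪f n l, h l⟫_𝕜) F (nhds ⟪flim l, h l⟫_𝕜))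
    (g : Lp 𝕜 2 (μ j)) :
    Tendsto (fun n => ⟪f n j, g⟫_𝕜) F (nhds ⟪flim j, g⟫_𝕜) := by
  classical
  let v : ∀ l, Lp 𝕜 2 (μ l) := Function.update h j g
  have hvj : v j = g := Function.update_self j g h
  have hvl : ∀ l, l ≠ j → v l = h l := fun l hl => Function.update_of_ne hl g h
  have hprod : Tendsto (fun n => ∏ l, ⟪f n l, v l⟫_𝕜) F (nhds (∏ l, ⟪flim l, v l⟫_𝕜)) := by
    simpa only [inner_lpPureTensor] using hweak (lpPureTensor v)
  rw [← hvj]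
  refine tendsto_factor_of_tendsto_prod j hprod (fun l hl => ?_) fun l hl => ?_
  · simpa only [hvl l hl] using hother l hl
  · simpa only [hvl l hl] using hne l hl

end PureTensor

/-- **Weak convergence of a tensor factor from weak convergence of product functions.**
Let `μ₁, …, μ_k` be σ-finite, fix `j`, and let `fₙ⁽ˡ⁾, f⁽ˡ⁾ ∈ L²(μ_l)` with each `f⁽ˡ⁾ ≠ 0`.
If the product functions `Fₙ(x) = ∏ₗ fₙ⁽ˡ⁾(xₗ)` converge weakly in `L²(μ₁ ⊗ ⋯ ⊗ μ_k)` to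
`F(x) = ∏ₗ f⁽ˡ⁾(xₗ)` (i.e. integrals against every `G ∈ L²` converge), and for every
`l ≠ j` we have `fₙ⁽ˡ⁾ → f⁽ˡ⁾` in `L²`-norm, then `fₙ⁽ʲ⁾ → f⁽ʲ⁾` weakly in `L²(μ_j)`. -/
theorem weak_convergence_of_factor
    {k : ℕ} {Ω : Fin k → Type*} [∀ l, MeasurableSpace (Ω l)]
    (μ : ∀ l, Measure (Ω l)) [∀ l, SigmaFinite (μ l)]
    (j : Fin k)
    (f : ℕ → ∀ l, Lp ℝ 2 (μ l)) (flim : ∀ l, Lp ℝ 2 (μ l))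
    (hne : ∀ l, flim l ≠ 0)
    (hweak : ∀ G : Lp ℝ 2 (Measure.pi μ),
      Tendsto (fun n => ∫ x, (∏ l, f n l (x l)) * G x ∂(Measure.pi μ)) atTop
        (nhds (∫ x, (∏ l, flim l (x l)) * G x ∂(Measure.pi μ))))
    (hstrong : ∀ l, l ≠ j → Tendsto (fun n => ‖f n l - flim l‖) atTop (nhds 0)) :
    ∀ g : Lp ℝ 2 (μ j),
      Tendsto (fun n => inner (𝕜 := ℝ) (f n j) g) atTop
        (nhds (inner (𝕜 := ℝ) (flim j) g)) := by
  refine weak_convergence_of_factor_general j f flim flim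
    (fun l _ => inner_self_ne_zero.2 (hne l)) (fun G => ?_) fun l hl =>
      (tendsto_iff_norm_sub_tendsto_zero.2 (hstrong l hl)).inner tendsto_const_nhds
  simpa only [inner_lpPureTensor_left, conj_trivial] using hweak G
end

section
/- Let α > 0 be real, k ∈ ℕ, x ∈ ℤ^k, i ∈ {1, …, k}, and r ∈ ℤ with r ≠ 0. Then the detailed balance relation ν(x) · (α + #{ j ≠ i : x_j = x_i + r }) = ν(x^{i,r}) · (α + #{ j ≠ i : x_j = x_i }) holds. -/
/-!
Deleting particle `i` leaves the same background of `k - 1` particles before and after the jump.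
Putting the particle back at a site that holds `n` others replaces the factor `Γ(α + n) / Γ(α)` of
the product by `Γ(α + n + 1) / Γ(α)`, that is, multiplies the weight of the background by `α + n`.
Both sides of the balance are therefore the weight of the background times the same two factors.
-/

open Finset

/-- The number of particles of the configuration `x ∈ ℤ^k` at site `j ∈ ℤ`. -/
def numAt {k : ℕ} (x : Fin k → ℤ) (j : ℤ) : ℕ :=
  (Finset.univ.filter fun i => x i = j).card

/-- The reversible measure `ν(x) = ∏_{j ∈ ℤ} Γ(α + ℓ_x(j)) / Γ(α)` of `k` SIP(α) particles;
only finitely many factors differ from `1`. -/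
noncomputable def nuSIP (α : ℝ) {k : ℕ} (x : Fin k → ℤ) : ℝ :=
  ∏ᶠ j : ℤ, Real.Gamma (α + numAt x j) / Real.Gamma α

section Occupation

variable {ι S : Type*} [Fintype ι] [DecidableEq S]

/-- The number of particles at site `s` in the configuration `x`, where the labels `ι` and the sites
`S` are arbitrary; `numAt` is the case `ι = Fin k`, `S = ℤ`. -/
def occupation (x : ι → S) (s : S) : ℕ :=
  #{j | x j = s}

/-- The number of particles other than `i` at site `s`, the quantity on which the rate of a jump of
particle `i` to `s` depends. It is a condition on the labels, not a subtraction in `ℕ`. -/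
def occupationOthers [DecidableEq ι] (x : ι → S) (i : ι) (s : S) : ℕ :=
  #{j | j ≠ i ∧ x j = s}

/-- The product over all sites of a single-site weight `w` of the occupation number; `nuSIP` is the
case `w n = Γ(α + n) / Γ(α)`. For infinite `S` and `w 0 ≠ 1` it has the junk value `1`. -/
noncomputable def occupationWeight {M : Type*} [CommMonoid M] (w : ℕ → M) (x : ι → S) : M :=
  ∏ᶠ s, w (occupation x s)

variable [DecidableEq ι]

theorem occupation_apply_self (x : ι → S) (i : ι) :
    occupation x (x i) = occupationOthers x i (x i) + 1 := by
  have insert_eq :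
      ({j | x j = x i} : Finset ι) = insert i ({j | j ≠ i ∧ x j = x i} : Finset ι) := by
    ext j
    by_cases hj : j = i <;> simp [hj]
  rw [occupation, insert_eq, card_insert_of_notMem (by simp), occupationOthers]

theorem occupation_of_ne {x : ι → S} {i : ι} {s : S} (hs : s ≠ x i) :
    occupation x s = occupationOthers x i s := by
  refine congrArg card (filter_congr fun j _ => ⟨fun hj => ⟨?_, hj⟩, And.right⟩)
  rintro rfl
  exact hs hj.symm

theorem occupationOthers_update (x : ι → S) (i : ι) (s t : S) :
    occupationOthers (Function.update x i s) i t = occupationOthers x i t :=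
  congrArg card <| filter_congr fun j _ =>
    and_congr_right fun hj => by rw [Function.update_of_ne hj]

theorem occupationOthers_eq_zero {x : ι → S} {s : S} (hs : s ∉ Set.range x) (i : ι) :
    occupationOthers x i s = 0 :=
  card_eq_zero.mpr <| filter_eq_empty_iff.mpr fun j _ hj => hs ⟨j, hj.2⟩

theorem finite_mulSupport_occupationOthers {M : Type*} [One M] {w : ℕ → M} (hw : w 0 = 1)
    (x : ι → S) (i : ι) :
    (Function.mulSupport fun s => w (occupationOthers x i s)).Finite := by
  refine (Set.finite_range x).subset fun s hs => ?_
  by_contra hsx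
  exact hs (by simp only [occupationOthers_eq_zero hsx, hw])

variable {M : Type*} [CommMonoid M] {w a : ℕ → M}

theorem occupationWeight_eq_finprod_occupationOthers_mul (hw : w 0 = 1)
    (hwa : ∀ n, w (n + 1) = w n * a n) (x : ι → S) (i : ι) :
    occupationWeight w x =
      (∏ᶠ s, w (occupationOthers x i s)) * a (occupationOthers x i (x i)) := by
  let added : S → M := Pi.mulSingle (x i) (a (occupationOthers x i (x i)))
  have factor (s : S) : w (occupation x s) = w (occupationOthers x i s) * added s := by
    by_cases hs : s = x i
    · subst hs
      simp only [added, occupation_apply_self, hwa, Pi.mulSingle_eq_same]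
    · simp only [added, occupation_of_ne hs, Pi.mulSingle_eq_of_ne hs, mul_one]
  have finite_added : (Function.mulSupport added).Finite :=
    (Set.finite_singleton (x i)).subset Pi.mulSupport_mulSingle_subset
  have finprod_added : ∏ᶠ s, added s = a (occupationOthers x i (x i)) := by
    rw [finprod_eq_single added (x i) fun s hs => Pi.mulSingle_eq_of_ne hs _]
    exact Pi.mulSingle_eq_same _ _
  rw [occupationWeight, finprod_congr factor,
    finprod_mul_distrib (finite_mulSupport_occupationOthers hw x i) finite_added, finprod_added]

theorem occupationWeight_detailed_balance (hw : w 0 = 1) (hwa : ∀ n, w (n + 1) = w n * a n)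
    (x : ι → S) (i : ι) (s : S) :
    occupationWeight w x * a (occupationOthers x i s) =
      occupationWeight w (Function.update x i s) * a (occupationOthers x i (x i)) := by
  simp only [occupationWeight_eq_finprod_occupationOthers_mul hw hwa _ i,
    occupationOthers_update, Function.update_self]
  exact mul_right_comm _ _ _

end Occupation

/-- The single-site weight `Γ(α + n) / Γ(α)` of SIP(α). -/
noncomputable def sipWeight (α : ℝ) (n : ℕ) : ℝ :=
  Real.Gamma (α + n) / Real.Gamma α

theorem sipWeight_zero {α : ℝ} (hα : ∀ n : ℕ, α ≠ -n) : sipWeight α 0 = 1 := by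
  rw [sipWeight, Nat.cast_zero, add_zero, div_self (Real.Gamma_ne_zero hα)]

theorem sipWeight_succ {α : ℝ} (hα : ∀ n : ℕ, α ≠ -n) (n : ℕ) :
    sipWeight α (n + 1) = sipWeight α n * (α + n) := by
  have hn : α + n ≠ 0 := fun h => hα n (eq_neg_of_add_eq_zero_left h)
  rw [sipWeight, sipWeight, Nat.cast_succ, ← add_assoc, Real.Gamma_add_one hn, mul_comm,
    mul_div_right_comm]

theorem sip_detailed_balance_general {ι S : Type*} [Fintype ι] [DecidableEq ι] [DecidableEq S]
    {α : ℝ} (hα : ∀ n : ℕ, α ≠ -n) (x : ι → S) (i : ι) (s : S) :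
    occupationWeight (sipWeight α) x * (α + occupationOthers x i s) =
      occupationWeight (sipWeight α) (Function.update x i s) *
        (α + occupationOthers x i (x i)) :=
  occupationWeight_detailed_balance (a := fun n => α + n) (sipWeight_zero hα)
    (sipWeight_succ hα) x i s

/-- **Detailed balance for the `k`-particle SIP(α).** For `α > 0`, `x ∈ ℤ^k`, `i` and `r ≠ 0`,
`ν(x) (α + #{j ≠ i : x_j = x_i + r}) = ν(x^{i,r}) (α + #{j ≠ i : x_j = x_i})`. -/
theorem sip_detailed_balance (α : ℝ) (hα : 0 < α) (k : ℕ) (x : Fin k → ℤ)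
    (i : Fin k) (r : ℤ) (hr : r ≠ 0) :
    nuSIP α x * (α + ((Finset.univ.filter fun j => j ≠ i ∧ x j = x i + r).card : ℝ))
      = nuSIP α (Function.update x i (x i + r)) *
        (α + ((Finset.univ.filter fun j => j ≠ i ∧ x j = x i).card : ℝ)) :=
  have not_pole (n : ℕ) : α ≠ -n := ((neg_nonpos.mpr n.cast_nonneg).trans_lt hα).ne'
  sip_detailed_balance_general not_pole x i (x i + r)
end

section
/- Let α > 0 be real and k ∈ ℕ. For f : ℤ^k → ℝ define (Lf)(x) := Σ_{i=1}^k Σ_{σ ∈ {−1,1}} (α + #{ j ≠ i : x_j = x_i + σ }) · ( f(x^{i,σ}) − f(x) ). Then for all finitely supported functions f, g : ℤ^k → ℝ, the generator L is symmetric in L²(ℤ^k, ν): Σ_{x ∈ ℤ^k} ν(x) g(x) (Lf)(x) = Σ_{x ∈ ℤ^k} ν(x) f(x) (Lg)(x) (both sums have only finitely many nonzero terms). -/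
open Finset

/-- The (unscaled) generator of `k` interacting SIP(α) particles in coordinate notation:
`(Lf)(x) = Σᵢ Σ_{σ = ±1} (α + #{j ≠ i : x_j = x_i + σ}) (f(x^{i,σ}) − f(x))`. -/
noncomputable def sipGen (α : ℝ) {k : ℕ} (f : (Fin k → ℤ) → ℝ) (x : Fin k → ℤ) : ℝ :=
  ∑ i : Fin k, ∑ σ ∈ ({-1, 1} : Finset ℤ),
    (α + ((Finset.univ.filter fun j => j ≠ i ∧ x j = x i + σ).card : ℝ)) *
      (f (Function.update x i (x i + σ)) - f x)

/-!
The generator moves one particle at a time, so reversibility reduces to detailed balance for a jump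
of one particle `i`. Taking particle `i` out of `x`, the functional equation `Γ (z + 1) = z Γ z`
splits `ν x` into `α + #{j ≠ i : x j = x i}` times the weight of the remaining particles. The first
factor is the rate of the reverse jump and the second is unaffected by the jump. In
`ν (g Lf - f Lg)` the diagonal terms cancel pointwise, and detailed balance makes the currents of a
jump and of its reverse cancel after summation.
-/

lemma finsum_current_symm_eq_neg {X R : Type*} [CommRing R] (T : X ≃ X) {w c c' : X → R}
    (balance : ∀ x, w x * c x = w (T x) * c' (T x)) (f g : X → R) :
    ∑ᶠ x, w x * c' x * (g x * f (T.symm x) - f x * g (T.symm x)) =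
      -∑ᶠ x, w x * c x * (g x * f (T x) - f x * g (T x)) := by
  rw [← finsum_comp_equiv T, ← finsum_neg_distrib]
  refine finsum_congr fun x => ?_
  rw [T.symm_apply_apply, ← balance]
  ring

lemma hasFiniteMulSupport_Gamma_div {ι : Type*} {α : ℝ} (hα : Real.Gamma α ≠ 0) {n : ι → ℕ}
    (hn : n.HasFiniteSupport) :
    (fun s => Real.Gamma (α + n s) / Real.Gamma α).HasFiniteMulSupport := by
  refine hn.subset fun s hs hns => hs ?_
  simp only [hns, Nat.cast_zero, add_zero, div_self hα]

section SIP

variable {k : ℕ}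

/-- The number of particles other than `i` at site `s`. -/
def numOthersAt (x : Fin k → ℤ) (i : Fin k) (s : ℤ) : ℕ :=
  #{j | j ≠ i ∧ x j = s}

/-- The weight `ν` of the configuration left after removing particle `i` from `x`. -/
noncomputable def nuOthers (α : ℝ) (x : Fin k → ℤ) (i : Fin k) : ℝ :=
  ∏ᶠ s : ℤ, Real.Gamma (α + numOthersAt x i s) / Real.Gamma α

/-- The jump `x ↦ x^{i,σ}` of particle `i` by `σ`, as a permutation of the configurations. -/
def hop (i : Fin k) (σ : ℤ) : (Fin k → ℤ) ≃ (Fin k → ℤ) where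
  toFun x := Function.update x i (x i + σ)
  invFun x := Function.update x i (x i + -σ)
  left_inv x := by simp
  right_inv x := by simp

/-- The rate at which particle `i` jumps by `σ`. -/
def hopRate (α : ℝ) (i : Fin k) (σ : ℤ) (x : Fin k → ℤ) : ℝ :=
  α + numOthersAt x i (x i + σ)

/-- The contribution of the jump `x ↦ x^{i,σ}` to `ν (g Lf - f Lg)`. -/
noncomputable def hopCurrent (α : ℝ) (f g : (Fin k → ℤ) → ℝ) (i : Fin k) (σ : ℤ)
    (x : Fin k → ℤ) : ℝ :=
  nuSIP α x * hopRate α i σ x * (g x * f (hop i σ x) - f x * g (hop i σ x))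

lemma numAt_self (x : Fin k → ℤ) (i : Fin k) : numAt x (x i) = numOthersAt x i (x i) + 1 := by
  have insert_particle :
      univ.filter (fun j => x j = x i) = insert i (univ.filter fun j => j ≠ i ∧ x j = x i) := by
    ext j
    by_cases hj : j = i <;> simp [hj]
  rw [numAt, insert_particle, card_insert_of_notMem (by simp), numOthersAt]

lemma numAt_of_ne {x : Fin k → ℤ} {i : Fin k} {s : ℤ} (hs : s ≠ x i) :
    numAt x s = numOthersAt x i s := by
  refine congrArg card (filter_congr fun j _ => ⟨fun hj => ⟨?_, hj⟩, And.right⟩)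
  rintro rfl
  exact hs hj.symm

lemma numOthersAt_update (x : Fin k → ℤ) (i : Fin k) (t s : ℤ) :
    numOthersAt (Function.update x i t) i s = numOthersAt x i s :=
  congrArg card <| filter_congr fun _ _ =>
    and_congr_right fun hj => by rw [Function.update_of_ne hj]

lemma hasFiniteSupport_numAt (x : Fin k → ℤ) : (numAt x).HasFiniteSupport := by
  refine (Set.finite_range x).subset fun s hs => ?_
  obtain ⟨i, hi⟩ := card_ne_zero.mp hs
  exact ⟨i, (mem_filter.mp hi).2⟩

lemma numOthersAt_le_numAt (x : Fin k → ℤ) (i : Fin k) (s : ℤ) : numOthersAt x i s ≤ numAt x s :=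
  card_le_card <| monotone_filter_right _ fun _ _ => And.right

lemma hasFiniteSupport_numOthersAt (x : Fin k → ℤ) (i : Fin k) :
    (numOthersAt x i).HasFiniteSupport :=
  (hasFiniteSupport_numAt x).subset fun s hs h =>
    hs (Nat.eq_zero_of_le_zero (h ▸ numOthersAt_le_numAt x i s))

lemma nuOthers_update (α : ℝ) (x : Fin k → ℤ) (i : Fin k) (t : ℤ) :
    nuOthers α (Function.update x i t) i = nuOthers α x i := by
  simp only [nuOthers, numOthersAt_update]

lemma nuSIP_eq_mul_nuOthers {α : ℝ} (hα : ∀ m : ℕ, α ≠ -m) (x : Fin k → ℤ) (i : Fin k) :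
    nuSIP α x = (α + numOthersAt x i (x i)) * nuOthers α x i := by
  have Gamma_step : Real.Gamma (α + numAt x (x i)) =
      (α + numOthersAt x i (x i)) * Real.Gamma (α + numOthersAt x i (x i)) := by
    rw [numAt_self, Nat.cast_add_one, ← add_assoc, Real.Gamma_add_one]
    exact fun h => hα _ (eq_neg_of_add_eq_zero_left h)
  have other_sites : ∏ᶠ (s) (_ : s ≠ x i), Real.Gamma (α + numAt x s) / Real.Gamma α =
      ∏ᶠ (s) (_ : s ≠ x i), Real.Gamma (α + numOthersAt x i s) / Real.Gamma α :=
    finprod_congr fun s => finprod_congr fun hs => by rw [numAt_of_ne hs]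
  have hΓ := Real.Gamma_ne_zero hα
  rw [nuSIP, nuOthers,
    ← mul_finprod_cond_ne (x i) (hasFiniteMulSupport_Gamma_div hΓ (hasFiniteSupport_numAt x)),
    ← mul_finprod_cond_ne (x i)
      (hasFiniteMulSupport_Gamma_div hΓ (hasFiniteSupport_numOthersAt x i)),
    other_sites, Gamma_step, mul_div_assoc, mul_assoc]

lemma nuSIP_mul_hopRate {α : ℝ} (hα : ∀ m : ℕ, α ≠ -m) (i : Fin k) (σ : ℤ) (x : Fin k → ℤ) :
    nuSIP α x * hopRate α i σ x = nuSIP α (hop i σ x) * hopRate α i (-σ) (hop i σ x) := by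
  simp only [hopRate, hop, Equiv.coe_fn_mk, nuSIP_eq_mul_nuOthers hα _ i, numOthersAt_update,
    nuOthers_update, Function.update_self, add_neg_cancel_right]
  ring

lemma finsum_hopCurrent_neg {α : ℝ} (hα : ∀ m : ℕ, α ≠ -m) (f g : (Fin k → ℤ) → ℝ)
    (i : Fin k) (σ : ℤ) :
    ∑ᶠ x, hopCurrent α f g i (-σ) x = -∑ᶠ x, hopCurrent α f g i σ x :=
  finsum_current_symm_eq_neg (hop i σ) (nuSIP_mul_hopRate hα i σ) f g

lemma sipGen_eq_sum_hop (α : ℝ) (f : (Fin k → ℤ) → ℝ) (x : Fin k → ℤ) :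
    sipGen α f x = ∑ i, ∑ σ ∈ {-1, 1}, hopRate α i σ x * (f (hop i σ x) - f x) :=
  rfl

lemma nuSIP_mul_sipGen_sub (α : ℝ) (f g : (Fin k → ℤ) → ℝ) (x : Fin k → ℤ) :
    nuSIP α x * g x * sipGen α f x - nuSIP α x * f x * sipGen α g x =
      ∑ i, ∑ σ ∈ {-1, 1}, hopCurrent α f g i σ x := by
  simp only [sipGen_eq_sum_hop, mul_sum, ← sum_sub_distrib, hopCurrent]
  refine sum_congr rfl fun i _ => sum_congr rfl fun σ _ => ?_
  ring

lemma hasFiniteSupport_comp_hop {g : (Fin k → ℤ) → ℝ} (hg : g.HasFiniteSupport)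
    (i : Fin k) (σ : ℤ) : (fun x => g (hop i σ x)).HasFiniteSupport :=
  hg.fun_comp_of_injective (hop i σ).injective

lemma hasFiniteSupport_hopCurrent (α : ℝ) (f : (Fin k → ℤ) → ℝ) {g : (Fin k → ℤ) → ℝ}
    (hg : g.HasFiniteSupport) (i : Fin k) (σ : ℤ) :
    (hopCurrent α f g i σ).HasFiniteSupport :=
  ((hg.fun_mul_left _).fun_sub ((hasFiniteSupport_comp_hop hg i σ).fun_mul_right f)).fun_mul_right _

lemma hasFiniteSupport_sipGen (α : ℝ) {g : (Fin k → ℤ) → ℝ} (hg : g.HasFiniteSupport) :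
    (sipGen α g).HasFiniteSupport :=
  .sum (fun i => .sum (fun σ =>
    ((hasFiniteSupport_comp_hop hg i σ).fun_sub hg).fun_mul_right _) _) _

theorem sip_generator_symmetric_general {α : ℝ} (hα : ∀ m : ℕ, α ≠ -m)
    (f : (Fin k → ℤ) → ℝ) {g : (Fin k → ℤ) → ℝ} (hg : g.HasFiniteSupport) :
    ∑ᶠ x : Fin k → ℤ, nuSIP α x * g x * sipGen α f x
      = ∑ᶠ x : Fin k → ℤ, nuSIP α x * f x * sipGen α g x := by
  have hLg := hasFiniteSupport_sipGen α hg
  have current_finite := hasFiniteSupport_hopCurrent α f hg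
  rw [← sub_eq_zero, ← finsum_sub_distrib (by fun_prop) (by fun_prop)]
  calc ∑ᶠ x, (nuSIP α x * g x * sipGen α f x - nuSIP α x * f x * sipGen α g x)
      = ∑ᶠ x, ∑ i, ∑ σ ∈ {-1, 1}, hopCurrent α f g i σ x :=
        finsum_congr (nuSIP_mul_sipGen_sub α f g)
    _ = ∑ i, ∑ σ ∈ {-1, 1}, ∑ᶠ x, hopCurrent α f g i σ x := by
        rw [finsum_sum_comm _ _ fun i _ => by fun_prop]
        exact sum_congr rfl fun i _ => finsum_sum_comm _ _ fun σ _ => current_finite i σ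
    _ = 0 := sum_eq_zero fun i _ => by
        rw [sum_pair (by decide), finsum_hopCurrent_neg hα, neg_add_cancel]

end SIP

/-- **Reversibility (symmetry) of the `k`-particle SIP(α) generator with respect to `ν`.**
For finitely supported `f, g : ℤ^k → ℝ`,
`Σₓ ν(x) g(x) (Lf)(x) = Σₓ ν(x) f(x) (Lg)(x)` (finitely many nonzero terms). -/
theorem sip_generator_symmetric (α : ℝ) (hα : 0 < α) (k : ℕ)
    (f g : (Fin k → ℤ) → ℝ)
    (hf : (Function.support f).Finite) (hg : (Function.support g).Finite) :
    ∑ᶠ x : Fin k → ℤ, nuSIP α x * g x * sipGen α f x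
      = ∑ᶠ x : Fin k → ℤ, nuSIP α x * f x * sipGen α g x := by
  have not_pole (m : ℕ) : α ≠ -m := (neg_nonpos.mpr m.cast_nonneg |>.trans_lt hα).ne'
  exact sip_generator_symmetric_general not_pole f hg
end

section
/- Let α ≥ 1 be real and k ∈ ℕ. Then for every function f : ℤ^k → ℝ, the following inequality of sums valued in the extended nonnegative reals [0, ∞] holds: Σ_{x ∈ ℤ^k} Σ_{i=1}^k Σ_{σ ∈ {−1,1}} α · ( f(x^{i,σ}) − f(x) )² ≤ Σ_{x ∈ ℤ^k} Σ_{i=1}^k Σ_{σ ∈ {−1,1}} ν(x) · (α + #{ j ≠ i : x_j = x_i + σ }) · ( f(x^{i,σ}) − f(x) )², i.e. the Dirichlet form of k SIP(α) particles dominates the Dirichlet form of k independent random walkers. -/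
open Finset

theorem Gamma_le_Gamma_add_one {s : ℝ} (hs : 1 ≤ s) : Real.Gamma s ≤ Real.Gamma (s + 1) := by
  have hs_pos : 0 < s := one_pos.trans_le hs
  rw [Real.Gamma_add_one hs_pos.ne']
  exact le_mul_of_one_le_left (Real.Gamma_pos_of_pos hs_pos).le hs

theorem monotone_Gamma_add_natCast {s : ℝ} (hs : 1 ≤ s) :
    Monotone fun n : ℕ => Real.Gamma (s + n) := by
  refine monotone_nat_of_le_succ fun n => ?_
  rw [Nat.cast_succ, ← add_assoc]
  exact Gamma_le_Gamma_add_one (le_add_of_le_of_nonneg hs n.cast_nonneg)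

theorem one_le_nuSIP {α : ℝ} (hα : 1 ≤ α) {k : ℕ} (x : Fin k → ℤ) : 1 ≤ nuSIP α x := by
  refine one_le_finprod fun j => ?_
  have hΓ : Real.Gamma α ≤ Real.Gamma (α + numAt x j) := by
    simpa using monotone_Gamma_add_natCast hα (numAt x j).zero_le
  exact (one_le_div (Real.Gamma_pos_of_pos (one_pos.trans_le hα))).2 hΓ

theorem le_nuSIP_mul_add {α : ℝ} (hα : 1 ≤ α) {k : ℕ} (x : Fin k → ℤ) {r : ℝ} (hr : 0 ≤ r) :
    α ≤ nuSIP α x * (α + r) :=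
  calc
    α ≤ α + r := le_add_of_nonneg_right hr
    _ ≤ nuSIP α x * (α + r) :=
      le_mul_of_one_le_left (add_nonneg (zero_le_one.trans hα) hr) (one_le_nuSIP hα x)

/-- **Dirichlet form domination.** For `α ≥ 1` and any `f : ℤ^k → ℝ`, the Dirichlet form of
`k` SIP(α) particles dominates the Dirichlet form of `k` independent random walkers, as an
inequality of sums valued in `[0, ∞]`:
`Σₓ Σᵢ Σ_{σ=±1} α (f(x^{i,σ}) − f(x))²
  ≤ Σₓ Σᵢ Σ_{σ=±1} ν(x) (α + #{j ≠ i : x_j = x_i + σ}) (f(x^{i,σ}) − f(x))²`. -/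
theorem sip_dirichlet_dominates_irw (α : ℝ) (hα : 1 ≤ α) (k : ℕ)
    (f : (Fin k → ℤ) → ℝ) :
    (∑' x : Fin k → ℤ, ∑ i : Fin k, ∑ σ ∈ ({-1, 1} : Finset ℤ),
        ENNReal.ofReal (α * (f (Function.update x i (x i + σ)) - f x) ^ 2))
      ≤ ∑' x : Fin k → ℤ, ∑ i : Fin k, ∑ σ ∈ ({-1, 1} : Finset ℤ),
        ENNReal.ofReal (nuSIP α x *
          (α + ((Finset.univ.filter fun j => j ≠ i ∧ x j = x i + σ).card : ℝ)) *
          (f (Function.update x i (x i + σ)) - f x) ^ 2) := by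
  refine ENNReal.tsum_le_tsum fun x => Finset.sum_le_sum fun i _ =>
    Finset.sum_le_sum fun σ _ => ENNReal.ofReal_le_ofReal ?_
  exact mul_le_mul_of_nonneg_right (le_nuSIP_mul_add hα x (Nat.cast_nonneg _)) (sq_nonneg _)
end

section
/- Let k ≥ 1 and let f : ℝ^k → ℝ be smooth with compact support. Then lim_{n→∞} (n^{2}/(2 n^{k})) · Σ_{x ∈ ℤ^k} Σ_{i=1}^k Σ_{σ ∈ {−1,1}} ( f((x + σ e_i)/n) − f(x/n) )² = Σ_{i=1}^k ∫_{ℝ^k} (∂f/∂x_i)(z)² dz, where e_i ∈ ℤ^k is the i-th standard basis vector, x/n denotes the point (x₁/n, …, x_k/n) ∈ ℝ^k, and the integral is with respect to Lebesgue measure on ℝ^k. -/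
open Filter MeasureTheory

/-!
Along a fixed direction `v`, the difference quotients of a compactly supported `C¹` function
converge uniformly to its directional derivative, since the derivative is uniformly continuous.
Hence so do their squares, and Riemann sums over the mesh `(1/n)ℤ^ι` of a uniformly convergent
sequence with uniformly bounded supports converge to the integral of the limit, because the number
of mesh points in a ball is `O(n ^ card ι)`. The discrete Dirichlet form is the sum of these Riemann
sums over the directions `±eᵢ`; the two signs have the same limit, which cancels the factor `1/2`.
-/

open Asymptotics Bornology Function Metric Set
open scoped Pointwise Topology

section UniformConvergence

variable {α β γ E F : Type*} {l : Filter β}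

lemma tendstoUniformly_comp_of_isBounded_range [PseudoMetricSpace E] [ProperSpace E]
    [UniformSpace γ] {G : β → α → E} {g : α → E} {φ : E → γ} (hG : TendstoUniformly G g l)
    (hg : IsBounded (range g)) (hφ : Continuous φ) :
    TendstoUniformly (fun b => φ ∘ G b) (φ ∘ g) l := by
  have hK : IsCompact (cthickening 1 (range g)) :=
    isCompact_of_isClosed_isBounded isClosed_cthickening hg.cthickening
  refine (hK.uniformContinuousOn_of_continuous hφ.continuousOn).comp_tendstoUniformly_eventually
    ?_ (fun a => self_subset_cthickening _ (mem_range_self a)) hG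
  filter_upwards [Metric.tendstoUniformly_iff.1 hG 1 one_pos] with b hb a
  exact mem_cthickening_of_dist_le _ _ _ _ (mem_range_self a) (by rw [dist_comm]; exact (hb a).le)

variable [NormedAddCommGroup E] [NormedSpace ℝ E] [NormedAddCommGroup F] [NormedSpace ℝ F]
  {f : E → F}

lemma exists_forall_norm_sub_sub_fderiv_le (hf : Differentiable ℝ f)
    (hf' : UniformContinuous (fderiv ℝ f)) {ε : ℝ} (hε : 0 < ε) :
    ∃ δ > 0, ∀ z h : E, ‖h‖ < δ → ‖f (z + h) - f z - fderiv ℝ f z h‖ ≤ ε * ‖h‖ := by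
  obtain ⟨δ, hδ, hclose⟩ := Metric.uniformContinuous_iff.1 hf' ε hε
  refine ⟨δ, hδ, fun z h hh => ?_⟩
  have hbound : ∀ y ∈ ball z δ, ‖fderiv ℝ f y - fderiv ℝ f z‖ ≤ ε := fun y hy => by
    rw [← dist_eq_norm]
    exact (hclose hy).le
  simpa only [add_sub_cancel_left] using
    (convex_ball z δ).norm_image_sub_le_of_norm_hasFDerivWithin_le'
      (fun y _ => (hf y).hasFDerivAt.hasFDerivWithinAt) hbound (mem_ball_self hδ)
      (by rwa [mem_ball_iff_norm, add_sub_cancel_left] : z + h ∈ ball z δ)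

lemma tendstoUniformly_inv_smul_sub_fderiv (hf : Differentiable ℝ f)
    (hf' : UniformContinuous (fderiv ℝ f)) (v : E) :
    TendstoUniformly (fun (t : ℝ) z => t⁻¹ • (f (z + t • v) - f z))
      (fun z => fderiv ℝ f z v) (𝓝[≠] 0) := by
  rw [Metric.tendstoUniformly_iff]
  intro ε hε
  obtain ⟨δ, hδ, hbound⟩ := exists_forall_norm_sub_sub_fderiv_le hf hf'
    (by positivity : 0 < ε / (‖v‖ + 1))
  have hsmall : ∀ᶠ t : ℝ in 𝓝[≠] 0, ‖t • v‖ < δ := by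
    have : Tendsto (fun t : ℝ => ‖t • v‖) (𝓝 0) (𝓝 0) := by
      simpa using (by fun_prop : Continuous fun t : ℝ => ‖t • v‖).tendsto 0
    exact nhdsWithin_le_nhds (this.eventually_lt_const hδ)
  filter_upwards [hsmall, self_mem_nhdsWithin] with t ht (ht0 : t ≠ 0) z
  have hquot : t⁻¹ • (f (z + t • v) - f z) - fderiv ℝ f z v
      = t⁻¹ • (f (z + t • v) - f z - fderiv ℝ f z (t • v)) := by
    rw [smul_sub t⁻¹ (_ - _), map_smul, inv_smul_smul₀ ht0]
  calc dist (fderiv ℝ f z v) (t⁻¹ • (f (z + t • v) - f z))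
      = ‖t‖⁻¹ * ‖f (z + t • v) - f z - fderiv ℝ f z (t • v)‖ := by
        rw [dist_comm, dist_eq_norm, hquot, norm_smul, norm_inv]
    _ ≤ ‖t‖⁻¹ * (ε / (‖v‖ + 1) * ‖t • v‖) := by gcongr; exact hbound z _ ht
    _ = ε * (‖v‖ / (‖v‖ + 1)) := by
        have : ‖t‖ ≠ 0 := norm_ne_zero_iff.2 ht0
        rw [norm_smul]
        field_simp
    _ < ε := mul_lt_of_lt_one_right hε ((div_lt_one (by positivity)).2 (lt_add_one _))

end UniformConvergence

section DifferenceQuotient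

variable {E : Type*} [NormedAddCommGroup E] [NormedSpace ℝ E] {f : E → ℝ}

/-- The squared difference quotient of `f` along `v` with step `1/n`, whose integral is the
contribution of the direction `v` to a discrete Dirichlet form. It vanishes for `n = 0`. -/
noncomputable def sqDiffQuotient (f : E → ℝ) (v : E) (n : ℕ) (z : E) : ℝ :=
  (n * (f (z + (n : ℝ)⁻¹ • v) - f z)) ^ 2

lemma tendstoUniformly_sqDiffQuotient (hf : ContDiff ℝ 1 f) (hsupp : HasCompactSupport f) (v : E) :
    TendstoUniformly (sqDiffQuotient f v) (fun z => fderiv ℝ f z v ^ 2) atTop := by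
  have hcont : Continuous (fderiv ℝ f) := hf.continuous_fderiv one_ne_zero
  have hslope := tendstoUniformly_inv_smul_sub_fderiv (hf.differentiable one_ne_zero)
    ((hsupp.fderiv ℝ).uniformContinuous_of_continuous hcont) v
  have hstep : Tendsto (fun n : ℕ => (n : ℝ)⁻¹) atTop (𝓝[≠] 0) :=
    tendsto_nhdsWithin_iff.2 ⟨tendsto_inv_atTop_nhds_zero_nat,
      (eventually_ne_atTop 0).mono fun n hn => inv_ne_zero (Nat.cast_ne_zero.2 hn)⟩
  have hquot : TendstoUniformly (fun (n : ℕ) z => (n : ℝ) * (f (z + (n : ℝ)⁻¹ • v) - f z))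
      (fun z => fderiv ℝ f z v) atTop := fun u hu => by
    simpa only [inv_inv, smul_eq_mul] using hstep.eventually (hslope u hu)
  have hbdd : IsBounded (range fun z => fderiv ℝ f z v) :=
    ((hsupp.fderiv_apply ℝ v).isCompact_range (hcont.clm_apply continuous_const)).isBounded
  exact tendstoUniformly_comp_of_isBounded_range hquot hbdd (continuous_pow 2)

lemma support_sqDiffQuotient_subset (f : E → ℝ) (v : E) (n : ℕ) :
    support (sqDiffQuotient f v n) ⊆ cthickening ‖v‖ (support f) := by
  intro z hz
  by_cases hfz : f z = 0
  · have hfzv : z + (n : ℝ)⁻¹ • v ∈ support f := fun h => hz (by simp [sqDiffQuotient, hfz, h])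
    refine mem_cthickening_of_dist_le _ _ _ _ hfzv ?_
    rw [dist_self_add_right, norm_smul, norm_inv, RCLike.norm_natCast]
    exact mul_le_of_le_one_left (norm_nonneg v) (Nat.cast_inv_le_one n)
  · exact self_subset_cthickening _ hfz

end DifferenceQuotient

section LatticeRiemannSum

variable {ι : Type*}

/-- The point `x / n` of the rescaled lattice `(1/n)ℤ^ι`. -/
noncomputable def latticePoint (n : ℕ) (x : ι → ℤ) : ι → ℝ :=
  fun l => x l / n

lemma latticePoint_injective {n : ℕ} (hn : n ≠ 0) :
    Injective (latticePoint n : (ι → ℤ) → ι → ℝ) := fun x y hxy => by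
  funext l
  have hl : (x l : ℝ) / n = y l / n := congrFun hxy l
  exact_mod_cast (div_left_inj' (Nat.cast_ne_zero.2 hn)).1 hl

lemma latticePoint_update_add [DecidableEq ι] (n : ℕ) (x : ι → ℤ) (i : ι) (m : ℤ) :
    latticePoint n (update x i (x i + m))
      = latticePoint n x + (n : ℝ)⁻¹ • Pi.single i (m : ℝ) := by
  funext l
  obtain rfl | hl := eq_or_ne l i
  · simp only [latticePoint, update_self, Int.cast_add, Pi.add_apply, Pi.smul_apply,
      Pi.single_eq_same, smul_eq_mul]
    ring
  · simp [latticePoint, hl]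

section Finite

variable [Finite ι]

lemma range_latticePoint {n : ℕ} (hn : n ≠ 0) :
    range (latticePoint n)
      = (n : ℝ)⁻¹ • (Submodule.span ℤ (range (Pi.basisFun ℝ ι)) : Set (ι → ℝ)) := by
  have : NeZero n := ⟨hn⟩
  have hn' : (n : ℝ) ≠ 0 := Nat.cast_ne_zero.2 hn
  ext z
  refine Iff.trans ?_ BoxIntegral.unitPartition.mem_smul_span_iff.symm
  simp only [Classical.skolem, mem_range, funext_iff, latticePoint, div_eq_iff hn',
    algebraMap_int_eq, eq_intCast, mul_comm]

lemma finite_preimage_latticePoint {n : ℕ} (hn : n ≠ 0) {s : Set (ι → ℝ)} (hs : IsBounded s) :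
    (latticePoint n ⁻¹' s).Finite := by
  have := Fintype.ofFinite ι
  have hcast : Injective fun (x : ι → ℤ) l => (x l : ℝ) := Int.cast_injective.comp_left
  refine ((ZSpan.setFinite_inter (Pi.basisFun ℝ ι) (hs.smul₀ (n : ℝ))).preimage
    hcast.injOn).subset fun x hx => ⟨⟨latticePoint n x, hx, ?_⟩, ?_⟩
  · funext l
    exact mul_div_cancel₀ _ (Nat.cast_ne_zero.2 hn)
  · exact (Pi.basisFun ℝ ι).mem_span_iff_repr_mem ℤ _ |>.2 fun l => ⟨x l, rfl⟩

lemma hasFiniteSupport_comp_latticePoint {M : Type*} [Zero M] {n : ℕ} (hn : n ≠ 0)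
    {F : (ι → ℝ) → M} (hF : IsBounded (support F)) :
    HasFiniteSupport fun x => F (latticePoint n x) :=
  finite_preimage_latticePoint hn hF

end Finite

variable [Fintype ι]

/-- The Riemann sum of `F` over the mesh `(1/n)ℤ^ι`. It is meaningful when `n ≠ 0` and `F` has
bounded support; otherwise the `finsum` may take the junk value `0`. -/
noncomputable def latticeRiemannSum (n : ℕ) (F : (ι → ℝ) → ℝ) : ℝ :=
  (∑ᶠ x : ι → ℤ, F (latticePoint n x)) / n ^ Fintype.card ι

lemma latticeRiemannSum_sub {n : ℕ} (hn : n ≠ 0) {F G : (ι → ℝ) → ℝ} (hF : IsBounded (support F))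
    (hG : IsBounded (support G)) :
    latticeRiemannSum n (F - G) = latticeRiemannSum n F - latticeRiemannSum n G := by
  simp only [latticeRiemannSum, Pi.sub_apply, ← sub_div,
    finsum_sub_distrib (hasFiniteSupport_comp_latticePoint hn hF)
      (hasFiniteSupport_comp_latticePoint hn hG)]

lemma latticeRiemannSum_sum {κ : Type*} {n : ℕ} (hn : n ≠ 0) {s : Finset κ}
    {F : κ → (ι → ℝ) → ℝ} (hF : ∀ j ∈ s, IsBounded (support (F j))) :
    latticeRiemannSum n (fun z => ∑ j ∈ s, F j z) = ∑ j ∈ s, latticeRiemannSum n (F j) := by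
  simp only [latticeRiemannSum, ← Finset.sum_div]
  rw [finsum_sum_comm _ _ fun j hj => hasFiniteSupport_comp_latticePoint hn (hF j hj)]

lemma latticeRiemannSum_const_mul (n : ℕ) (c : ℝ) (F : (ι → ℝ) → ℝ) :
    latticeRiemannSum n (fun z => c * F z) = c * latticeRiemannSum n F := by
  rw [latticeRiemannSum, ← mul_finsum, mul_div_assoc, latticeRiemannSum]

lemma latticeRiemannSum_mono {n : ℕ} (hn : n ≠ 0) {F G : (ι → ℝ) → ℝ}
    (hF : IsBounded (support F)) (hG : IsBounded (support G)) (hFG : F ≤ G) :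
    latticeRiemannSum n F ≤ latticeRiemannSum n G :=
  div_le_div_of_nonneg_right
    (finsum_le_finsum' (hasFiniteSupport_comp_latticePoint hn hF)
      (hasFiniteSupport_comp_latticePoint hn hG) fun x => hFG (latticePoint n x)) (by positivity)

lemma abs_latticeRiemannSum_le {n : ℕ} (hn : n ≠ 0) {s : Set (ι → ℝ)} (hs : IsBounded s)
    {F : (ι → ℝ) → ℝ} (hF : support F ⊆ s) {c : ℝ} (hc : ∀ z, |F z| ≤ c) :
    |latticeRiemannSum n F| ≤ c * latticeRiemannSum n (s.indicator 1) := by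
  have hind (a : ℝ) : IsBounded (support fun z => a * s.indicator (1 : (ι → ℝ) → ℝ) z) :=
    hs.subset ((support_mul_subset_right _ _).trans support_indicator_subset)
  have hpt (z : ι → ℝ) : |F z| ≤ c * s.indicator (1 : (ι → ℝ) → ℝ) z := by
    by_cases hz : z ∈ s
    · simpa [hz] using hc z
    · simp [hz, notMem_support.1 fun h => hz (hF h)]
  rw [abs_le, ← neg_mul, ← latticeRiemannSum_const_mul, ← latticeRiemannSum_const_mul]
  constructor
  · exact latticeRiemannSum_mono hn (hind _) (hs.subset hF) fun z => by
      simpa only [neg_mul] using (abs_le.1 (hpt z)).1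
  · exact latticeRiemannSum_mono hn (hs.subset hF) (hind _) fun z => (abs_le.1 (hpt z)).2

lemma latticeRiemannSum_indicator {n : ℕ} (hn : n ≠ 0) {s : Set (ι → ℝ)} (hs : IsBounded s)
    (F : (ι → ℝ) → ℝ) :
    latticeRiemannSum n (s.indicator F)
      = (∑' z : ↑(s ∩ (n : ℝ)⁻¹ • (Submodule.span ℤ (range (Pi.basisFun ℝ ι)) : Set (ι → ℝ))),
          F z) / n ^ Fintype.card ι := by
  rw [latticeRiemannSum, ← range_latticePoint hn, tsum_subtype,
    ← (latticePoint_injective hn).tsum_eq (support_indicator_subset.trans inter_subset_right),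
    tsum_eq_finsum
      (hasFiniteSupport_comp_latticePoint hn
        (hs.subset (support_indicator_subset.trans inter_subset_left)))]
  simp only [inter_comm s, ← indicator_indicator, indicator_of_mem (mem_range_self _)]

lemma tendsto_latticeRiemannSum_indicator {s : Set (ι → ℝ)} (hs : IsBounded s)
    (hmeas : MeasurableSet s) (hfrontier : volume (frontier s) = 0) {F : (ι → ℝ) → ℝ}
    (hF : Continuous F) :
    Tendsto (fun n => latticeRiemannSum n (s.indicator F)) atTop (𝓝 (∫ z in s, F z)) :=
  (tendsto_tsum_div_pow_atTop_integral s F hF hs hmeas hfrontier).congr' <|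
    (eventually_ne_atTop 0).mono fun _ hn => (latticeRiemannSum_indicator hn hs F).symm

lemma tendsto_latticeRiemannSum_indicator_closedBall (c : ι → ℝ) (R : ℝ) {F : (ι → ℝ) → ℝ}
    (hF : Continuous F) :
    Tendsto (fun n => latticeRiemannSum n ((closedBall c R).indicator F)) atTop
      (𝓝 (∫ z in closedBall c R, F z)) :=
  tendsto_latticeRiemannSum_indicator isBounded_closedBall isClosed_closedBall.measurableSet
    ((convex_closedBall c R).addHaar_frontier volume) hF

lemma tendsto_latticeRiemannSum {F : (ι → ℝ) → ℝ} (hF : Continuous F)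
    (hsupp : IsBounded (support F)) :
    Tendsto (fun n => latticeRiemannSum n F) atTop (𝓝 (∫ z, F z)) := by
  obtain ⟨R, hR⟩ := hsupp.subset_closedBall 0
  rw [← setIntegral_eq_integral_of_forall_compl_eq_zero fun z hz => notMem_support.1
    fun h => hz (hR h)]
  simpa only [indicator_eq_self.2 hR] using tendsto_latticeRiemannSum_indicator_closedBall 0 R hF

lemma latticeRiemannSum_sub_isLittleO {G : ℕ → (ι → ℝ) → ℝ} {g : (ι → ℝ) → ℝ}
    (hG : TendstoUniformly G g atTop) {s : Set (ι → ℝ)} (hs : IsBounded s)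
    (hsuppG : ∀ᶠ n in atTop, support (G n) ⊆ s) (hsuppg : support g ⊆ s) :
    (fun n => latticeRiemannSum n (G n) - latticeRiemannSum n g)
      =o[atTop] fun n => latticeRiemannSum n (s.indicator 1) := by
  refine isLittleO_iff.2 fun ε hε => ?_
  filter_upwards [Metric.tendstoUniformly_iff.1 hG ε hε, hsuppG, eventually_ne_atTop 0]
    with n hclose hn hn0
  have hdiff : support (G n - g) ⊆ s := (support_sub _ _).trans (union_subset hn hsuppg)
  have hle (z : ι → ℝ) : |(G n - g) z| ≤ ε := by
    rw [Pi.sub_apply, ← Real.dist_eq, dist_comm]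
    exact (hclose z).le
  calc ‖latticeRiemannSum n (G n) - latticeRiemannSum n g‖
      = |latticeRiemannSum n (G n - g)| := by
        rw [latticeRiemannSum_sub hn0 (hs.subset hn) (hs.subset hsuppg), Real.norm_eq_abs]
    _ ≤ ε * latticeRiemannSum n (s.indicator 1) := abs_latticeRiemannSum_le hn0 hs hdiff hle
    _ ≤ ε * ‖latticeRiemannSum n (s.indicator 1)‖ := by gcongr; exact Real.le_norm_self _

lemma tendsto_latticeRiemannSum_of_tendstoUniformly {G : ℕ → (ι → ℝ) → ℝ} {g : (ι → ℝ) → ℝ}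
    (hG : TendstoUniformly G g atTop) (hg : Continuous g) {s : Set (ι → ℝ)} (hs : IsBounded s)
    (hsupp : ∀ᶠ n in atTop, support (G n) ⊆ s) :
    Tendsto (fun n => latticeRiemannSum n (G n)) atTop (𝓝 (∫ z, g z)) := by
  obtain ⟨R, hR⟩ := hs.subset_closedBall 0
  have hsuppG : ∀ᶠ n in atTop, support (G n) ⊆ closedBall 0 R :=
    hsupp.mono fun n hn => hn.trans hR
  have hsuppg : support g ⊆ closedBall 0 R := fun z hz => by
    obtain ⟨n, hn, hnR⟩ := (((hG.tendsto_at z).eventually_ne hz).and hsuppG).exists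
    exact hnR hn
  have hball : (fun n => latticeRiemannSum n ((closedBall (0 : ι → ℝ) R).indicator 1))
      =O[atTop] fun _ => (1 : ℝ) :=
    (tendsto_latticeRiemannSum_indicator_closedBall 0 R continuous_one).isBigO_one ℝ
  have herror : Tendsto (fun n => latticeRiemannSum n (G n) - latticeRiemannSum n g)
      atTop (𝓝 0) :=
    (isLittleO_one_iff ℝ).1 <|
      (latticeRiemannSum_sub_isLittleO hG isBounded_closedBall hsuppG hsuppg).trans_isBigO hball
  simpa only [sub_add_cancel, zero_add] using
    herror.add (tendsto_latticeRiemannSum hg (isBounded_closedBall.subset hsuppg))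

end LatticeRiemannSum

section DirichletForm

variable {ι : Type*} [Fintype ι] {f : (ι → ℝ) → ℝ}

lemma tendsto_latticeRiemannSum_sqDiffQuotient (hf : ContDiff ℝ 1 f) (hsupp : HasCompactSupport f)
    (v : ι → ℝ) :
    Tendsto (fun n => latticeRiemannSum n (sqDiffQuotient f v n)) atTop
      (𝓝 (∫ z, fderiv ℝ f z v ^ 2)) :=
  tendsto_latticeRiemannSum_of_tendstoUniformly (tendstoUniformly_sqDiffQuotient hf hsupp v)
    (((hf.continuous_fderiv one_ne_zero).clm_apply continuous_const).pow 2)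
    (hsupp.isCompact.isBounded.subset (subset_tsupport f)).cthickening
    (.of_forall (support_sqDiffQuotient_subset f v))

variable [DecidableEq ι]

/-- The Dirichlet form of independent simple symmetric random walkers, indexed by `ι`, under
diffusive scaling, evaluated at the restriction of `f` to `(1/n)ℤ^ι`, each point of which has mass
`n ^ (-card ι)`. The choice of a `finsum` is harmless for `f` of bounded support and `n ≠ 0`. -/
noncomputable def discreteDirichletForm (n : ℕ) (f : (ι → ℝ) → ℝ) : ℝ :=
  (n : ℝ) ^ 2 / (2 * n ^ Fintype.card ι) *
    ∑ᶠ x : ι → ℤ, ∑ i, ∑ σ ∈ ({-1, 1} : Finset ℤ),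
      (f (latticePoint n (update x i (x i + σ))) - f (latticePoint n x)) ^ 2

lemma discreteDirichletForm_eq_sum {n : ℕ} (hn : n ≠ 0) (hf : IsBounded (support f)) :
    discreteDirichletForm n f = (∑ i, ∑ σ ∈ ({-1, 1} : Finset ℤ),
      latticeRiemannSum n (sqDiffQuotient f (Pi.single i (σ : ℝ)) n)) / 2 := by
  have hterm (x : ι → ℤ) (i : ι) (σ : ℤ) :
      sqDiffQuotient f (Pi.single i (σ : ℝ)) n (latticePoint n x) = (n : ℝ) ^ 2 *
        (f (latticePoint n (update x i (x i + σ))) - f (latticePoint n x)) ^ 2 := by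
    rw [sqDiffQuotient, latticePoint_update_add, mul_pow]
  have hbdd (v : ι → ℝ) : IsBounded (support (sqDiffQuotient f v n)) :=
    hf.cthickening.subset (support_sqDiffQuotient_subset f v n)
  rw [← Finset.sum_product', ← latticeRiemannSum_sum hn fun _ _ => hbdd _]
  simp only [latticeRiemannSum, hterm, Finset.sum_product, ← Finset.mul_sum]
  rw [← mul_finsum, discreteDirichletForm]
  ring

theorem irw_dirichlet_tendsto_bm_general (hf : ContDiff ℝ 1 f) (hsupp : HasCompactSupport f) :
    Tendsto (fun n => discreteDirichletForm n f) atTop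
      (𝓝 (∑ i, ∫ z, fderiv ℝ f z (Pi.single i 1) ^ 2)) := by
  have hsign (i : ι) (z : ι → ℝ) :
      fderiv ℝ f z (Pi.single i (-1)) ^ 2 = fderiv ℝ f z (Pi.single i 1) ^ 2 := by
    rw [Pi.single_neg, map_neg, neg_sq]
  have hlim := (tendsto_finsetSum Finset.univ fun i _ => tendsto_finsetSum ({-1, 1} : Finset ℤ)
    fun σ _ => tendsto_latticeRiemannSum_sqDiffQuotient hf hsupp (Pi.single i (σ : ℝ))).div_const 2
  have hsum : (∑ i, ∑ σ ∈ ({-1, 1} : Finset ℤ), ∫ z, fderiv ℝ f z (Pi.single i (σ : ℝ)) ^ 2) / 2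
      = ∑ i, ∫ z, fderiv ℝ f z (Pi.single i 1) ^ 2 := by
    simp only [Finset.sum_pair (by decide : (-1 : ℤ) ≠ 1), Int.cast_neg, Int.cast_one, hsign,
      Finset.sum_div, add_self_div_two]
  rw [hsum] at hlim
  refine hlim.congr' ((eventually_ne_atTop 0).mono fun n hn => ?_)
  exact (discreteDirichletForm_eq_sum hn
    (hsupp.isCompact.isBounded.subset (subset_tsupport f))).symm

end DirichletForm

/-- **Convergence of the discrete Dirichlet forms of `k` independent random walkers to the
Brownian Dirichlet form.** For `f ∈ C_c^∞(ℝ^k)`,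
`(n²/(2nᵏ)) Σ_{x ∈ ℤᵏ} Σᵢ Σ_{σ=±1} (f((x+σeᵢ)/n) − f(x/n))² → Σᵢ ∫_{ℝᵏ} (∂ᵢf)(z)² dz`
as `n → ∞` (only finitely many summands are nonzero, so the sum is a `finsum`). -/
theorem irw_dirichlet_tendsto_bm (k : ℕ) (hk : 1 ≤ k) (f : (Fin k → ℝ) → ℝ)
    (hsmooth : ContDiff ℝ (⊤ : ℕ∞) f) (hsupp : HasCompactSupport f) :
    Tendsto (fun n : ℕ =>
        ((n : ℝ) ^ 2 / (2 * (n : ℝ) ^ k)) *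
          ∑ᶠ x : Fin k → ℤ, ∑ i : Fin k, ∑ σ ∈ ({-1, 1} : Finset ℤ),
            (f (fun l => ((Function.update x i (x i + σ) l : ℤ) : ℝ) / n)
              - f (fun l => ((x l : ℤ) : ℝ) / n)) ^ 2)
      atTop
      (nhds (∑ i : Fin k, ∫ z : Fin k → ℝ, (fderiv ℝ f z (Pi.single i 1)) ^ 2)) := by
  have h := irw_dirichlet_tendsto_bm_general (hsmooth.of_le (by simp)) hsupp
  simp only [discreteDirichletForm, Fintype.card_fin] at h
  exact h
end

section
/- Let k ≥ 2 and let f : ℝ^k → ℝ be smooth with compact support. Let D_k := { x ∈ ℤ^k : ∃ i ≠ j with |x_i − x_j| ≤ 1 } be the set of lattice configurations in which two coordinates lie within distance 1 of each other. Then lim_{n→∞} n^{2−k} · Σ_{x ∈ D_k} Σ_{i=1}^k Σ_{σ ∈ {−1,1}} ( f((x + σ e_i)/n) − f(x/n) )² = 0, where e_i ∈ ℤ^k is the i-th standard basis vector and x/n = (x₁/n, …, x_k/n) ∈ ℝ^k. -/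
open Filter

/-!
A Dirichlet-form summand is `O(n⁻²)` since `f` is Lipschitz, and it vanishes outside a lattice cube
of side `O(n)` since `f` has compact support. Prescribing `x i - x j` costs one degree of freedom,
so only `O(n ^ (k - 1))` near-diagonal configurations lie in that cube. Multiplied by
`n ^ (2 - k)`, the total is `O(n⁻¹)`.
-/

section

open Finset Function Metric
open scoped NNReal

lemma finsum_mem_le_ncard_nsmul {α M : Type*} [AddCommMonoid M] [PartialOrder M]
    [IsOrderedAddMonoid M] {s t : Set α} {F : α → M} {B : M} (ht : t.Finite)
    (hF : support F ⊆ t) (hB : ∀ x ∈ s, F x ≤ B) :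
    ∑ᶠ x ∈ s, F x ≤ (s ∩ t).ncard • B := by
  have hst : (s ∩ t).Finite := ht.subset Set.inter_subset_right
  have hinter : s ∩ support F = s ∩ t ∩ support F := by
    rw [Set.inter_assoc, Set.inter_eq_right.2 hF]
  rw [finsum_mem_inter_support_eq F s (s ∩ t) hinter, finsum_mem_eq_finite_toFinset_sum F hst,
    Set.ncard_eq_toFinset_card _ hst]
  exact sum_le_card_nsmul _ _ _ fun x hx ↦ hB x (hst.mem_toFinset.1 hx).1

/-- The configurations of particles on `ℤ`, labelled by `ι`, with two of them within distance `r`.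
The set `D_k` of the paper is `nearDiagonal (Fin k) 1`. -/
def nearDiagonal (ι : Type*) (r : ℤ) : Set (ι → ℤ) :=
  {x | ∃ i j, i ≠ j ∧ |x i - x j| ≤ r}

/-- The function on `ℤ^ι` obtained by sampling `f` on the rescaled lattice `(1/n)ℤ^ι`. -/
noncomputable def latticeRestriction {ι : Type*} (f : (ι → ℝ) → ℝ) (n : ℕ) (x : ι → ℤ) : ℝ :=
  f fun l ↦ x l / n

/-- The contribution of the configuration `x` to the Dirichlet form, at `g`, of independent walkers
which each jump by any `σ ∈ S` at rate one. Nearest-neighbour jumps are `S = {-1, 1}`. -/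
def jumpEnergy {ι : Type*} [Fintype ι] [DecidableEq ι] (S : Finset ℤ) (g : (ι → ℤ) → ℝ)
    (x : ι → ℤ) : ℝ :=
  ∑ i, ∑ σ ∈ S, (g (update x i (x i + σ)) - g x) ^ 2

variable {ι : Type*} [Fintype ι]

-- The coordinate `x j` is determined by `x i` and the difference `x i - x j`.
lemma card_filter_sub_mem_piFinset_le [DecidableEq ι] {G : Type*} [AddGroup G] [DecidableEq G]
    {i j : ι} (hij : i ≠ j) (s t : Finset G) :
    #{x ∈ Fintype.piFinset fun _ : ι ↦ s | x i - x j ∈ t} ≤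
      #t * #s ^ (Fintype.card ι - 1) := by
  have hcard : #(t ×ˢ Fintype.piFinset fun _ : {l // l ≠ j} ↦ s) =
      #t * #s ^ (Fintype.card ι - 1) := by
    simp [Fintype.card_subtype_compl]
  rw [← hcard]
  refine card_le_card_of_injOn (fun x ↦ (x i - x j, fun l ↦ x l)) ?_ ?_
  · intro x hx
    obtain ⟨hs, ht⟩ := mem_filter.1 hx
    exact mem_product.2 ⟨ht, Fintype.mem_piFinset.2 fun l ↦ Fintype.mem_piFinset.1 hs l⟩
  · intro x _ y _ hxy
    obtain ⟨hdiff, hrest⟩ := Prod.mk.inj hxy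
    have hoff : ∀ l, l ≠ j → x l = y l := fun l hl ↦ congrFun hrest ⟨l, hl⟩
    have hj : x j = y j := by
      rwa [hoff i hij, sub_right_inj] at hdiff
    funext l
    rcases eq_or_ne l j with rfl | hl
    exacts [hj, hoff l hl]

lemma card_filter_exists_sub_mem_piFinset_le [DecidableEq ι] {G : Type*} [AddGroup G]
    [DecidableEq G] (s t : Finset G) :
    #{x ∈ Fintype.piFinset fun _ : ι ↦ s | ∃ i j, i ≠ j ∧ x i - x j ∈ t} ≤
      Fintype.card ι ^ 2 * (#t * #s ^ (Fintype.card ι - 1)) := by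
  have hcover : {x ∈ Fintype.piFinset fun _ : ι ↦ s | ∃ i j, i ≠ j ∧ x i - x j ∈ t} ⊆
      (univ : Finset ι).offDiag.biUnion fun p ↦
        {x ∈ Fintype.piFinset fun _ : ι ↦ s | x p.1 - x p.2 ∈ t} := by
    intro x hx
    obtain ⟨hs, i, j, hij, ht⟩ := mem_filter.1 hx
    exact mem_biUnion.2 ⟨(i, j), by simpa using hij, mem_filter.2 ⟨hs, ht⟩⟩
  have hpairs : #(univ : Finset ι).offDiag ≤ Fintype.card ι ^ 2 := by
    simp [offDiag_card, sq]
  refine (card_le_card hcover).trans ((card_biUnion_le_card_mul _ _ _ fun p hp ↦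
    card_filter_sub_mem_piFinset_le (mem_offDiag.1 hp).2.2 s t).trans ?_)
  gcongr

lemma mem_closedBall_zero_iff_forall_mem_Icc {M : ℕ} {x : ι → ℤ} :
    x ∈ closedBall 0 (M : ℝ) ↔ ∀ l, x l ∈ Icc (-M : ℤ) M := by
  simp only [mem_closedBall_zero_iff, pi_norm_le_iff_of_nonneg M.cast_nonneg, Int.norm_eq_abs,
    mem_Icc, ← abs_le]
  norm_cast

lemma ncard_nearDiagonal_inter_closedBall_le (r : ℤ) (M : ℕ) :
    (nearDiagonal ι r ∩ closedBall 0 M).ncard ≤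
      Fintype.card ι ^ 2 * (#(Icc (-r) r) * (2 * M + 1) ^ (Fintype.card ι - 1)) := by
  classical
  have hset : nearDiagonal ι r ∩ closedBall 0 M =
      ↑{x ∈ Fintype.piFinset fun _ : ι ↦ Icc (-M : ℤ) M |
        ∃ i j, i ≠ j ∧ x i - x j ∈ Icc (-r) r} := by
    ext x
    simp only [nearDiagonal, Set.mem_inter_iff, Set.mem_ofPred_eq, coe_filter,
      Fintype.mem_piFinset, mem_closedBall_zero_iff_forall_mem_Icc, abs_le,
      mem_Icc (a := -r), and_comm]
  have hside : #(Icc (-M : ℤ) M) = 2 * M + 1 := by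
    rw [Int.card_Icc]
    lia
  rw [hset, Set.ncard_coe_finset, ← hside]
  exact card_filter_exists_sub_mem_piFinset_le _ _

lemma lipschitzWith_latticeRestriction {f : (ι → ℝ) → ℝ} {C : ℝ≥0}
    (hf : LipschitzWith C f) (n : ℕ) :
    LipschitzWith (C / n) (latticeRestriction f n) := by
  refine LipschitzWith.of_dist_le_mul fun x y ↦ ?_
  have hscale : dist (fun l ↦ (x l : ℝ) / n) (fun l ↦ (y l : ℝ) / n) ≤ dist x y / n := by
    refine (dist_pi_le_iff (by positivity)).2 fun l ↦ ?_
    rw [Real.dist_eq, ← sub_div, abs_div, Nat.abs_cast, ← Real.dist_eq, Int.dist_cast_real]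
    gcongr
    exact dist_le_pi_dist x y l
  calc dist (latticeRestriction f n x) (latticeRestriction f n y)
      ≤ C * (dist x y / n) := (hf.dist_le_mul _ _).trans (by gcongr)
    _ = ↑(C / n : ℝ≥0) * dist x y := by push_cast; ring

lemma support_latticeRestriction_subset {f : (ι → ℝ) → ℝ} {R : ℝ}
    (hf : support f ⊆ closedBall 0 R) {n : ℕ} (hn : n ≠ 0) :
    support (latticeRestriction f n) ⊆ closedBall 0 (R * n) := by
  intro x hx
  have hnorm : ‖fun l ↦ (x l : ℝ) / n‖ ≤ R := mem_closedBall_zero_iff.1 (hf hx)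
  have hR : 0 ≤ R := (norm_nonneg _).trans hnorm
  refine mem_closedBall_zero_iff.2 ((pi_norm_le_iff_of_nonneg (by positivity)).2 fun l ↦ ?_)
  rw [Int.norm_eq_abs, ← div_le_iff₀ (by positivity)]
  simpa only [norm_div, Real.norm_eq_abs, Nat.abs_cast] using
    (norm_le_pi_norm (fun l ↦ (x l : ℝ) / n) l).trans hnorm

variable [DecidableEq ι]

lemma dist_update_add_self {E : Type*} [NormedAddCommGroup E] (x : ι → E) (i : ι) (v : E) :
    dist (update x i (x i + v)) x = ‖v‖ := by
  have hsub : update x i (x i + v) - x = Pi.single i v := by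
    rw [Pi.update_eq_sub_add_single, Pi.single_add]
    abel
  rw [dist_eq_norm, hsub, Pi.norm_single]

lemma jumpEnergy_nonneg (S : Finset ℤ) (g : (ι → ℤ) → ℝ) (x : ι → ℤ) : 0 ≤ jumpEnergy S g x :=
  sum_nonneg fun _ _ ↦ sum_nonneg fun _ _ ↦ sq_nonneg _

lemma jumpEnergy_le_of_lipschitzWith {S : Finset ℤ} {ρ : ℝ} (hS : ∀ σ ∈ S, ‖σ‖ ≤ ρ)
    {g : (ι → ℤ) → ℝ} {L : ℝ≥0} (hg : LipschitzWith L g) (x : ι → ℤ) :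
    jumpEnergy S g x ≤ Fintype.card ι * (#S * (L * ρ) ^ 2) := by
  have hjump : ∀ i, ∀ σ ∈ S, (g (update x i (x i + σ)) - g x) ^ 2 ≤ (L * ρ : ℝ) ^ 2 := by
    intro i σ hσ
    rw [← sq_abs, ← Real.dist_eq]
    gcongr
    calc dist (g (update x i (x i + σ))) (g x)
        ≤ L * ‖σ‖ := by simpa only [dist_update_add_self] using
            hg.dist_le_mul (update x i (x i + σ)) x
      _ ≤ L * ρ := by gcongr; exact hS σ hσ
  simpa only [jumpEnergy, nsmul_eq_mul, card_univ] using
    sum_le_card_nsmul univ _ _ fun i _ ↦ sum_le_card_nsmul S _ _ (hjump i)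

lemma support_jumpEnergy_subset {S : Finset ℤ} {ρ : ℝ} (hS : ∀ σ ∈ S, ‖σ‖ ≤ ρ)
    {g : (ι → ℤ) → ℝ} {M : ℝ} (hg : support g ⊆ closedBall 0 M) :
    support (jumpEnergy S g) ⊆ closedBall 0 (M + ρ) := by
  intro x hx
  obtain ⟨i, -, hi⟩ := exists_ne_zero_of_sum_ne_zero hx
  obtain ⟨σ, hσ, hne⟩ := exists_ne_zero_of_sum_ne_zero hi
  have hstep : dist x (update x i (x i + σ)) ≤ ρ := by
    rw [dist_comm, dist_update_add_self]
    exact hS σ hσ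
  by_cases hgx : g x = 0
  · have hupdate : update x i (x i + σ) ∈ closedBall 0 M := hg fun h ↦ hne (by simp [h, hgx])
    calc dist x 0 ≤ dist x (update x i (x i + σ)) + dist (update x i (x i + σ)) 0 :=
          dist_triangle _ _ _
      _ ≤ ρ + M := add_le_add hstep hupdate
      _ = M + ρ := add_comm _ _
  · exact closedBall_subset_closedBall (le_add_of_nonneg_right (dist_nonneg.trans hstep)) (hg hgx)

lemma finsum_nearDiagonal_jumpEnergy_le {S : Finset ℤ} {ρ : ℕ} (hS : ∀ σ ∈ S, ‖σ‖ ≤ ρ) (r : ℤ)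
    {g : (ι → ℤ) → ℝ} {L : ℝ≥0} (hL : LipschitzWith L g) {M : ℕ}
    (hg : support g ⊆ closedBall 0 M) :
    ∑ᶠ x ∈ nearDiagonal ι r, jumpEnergy S g x ≤
      Fintype.card ι ^ 2 * (#(Icc (-r) r) * (2 * (M + ρ) + 1) ^ (Fintype.card ι - 1)) *
        (Fintype.card ι * (#S * (L * ρ) ^ 2)) := by
  have hsupp : support (jumpEnergy S g) ⊆ closedBall 0 (M + ρ : ℕ) := by
    simpa only [Nat.cast_add] using support_jumpEnergy_subset hS hg
  have hfinite : (closedBall (0 : ι → ℤ) (M + ρ : ℕ)).Finite :=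
    (isCompact_closedBall _ _).finite_of_discrete
  have hcount : ((nearDiagonal ι r ∩ closedBall 0 (M + ρ : ℕ)).ncard : ℝ) ≤
      Fintype.card ι ^ 2 * (#(Icc (-r) r) * (2 * (M + ρ) + 1) ^ (Fintype.card ι - 1)) :=
    mod_cast ncard_nearDiagonal_inter_closedBall_le r (M + ρ)
  refine (finsum_mem_le_ncard_nsmul hfinite hsupp fun x _ ↦
    jumpEnergy_le_of_lipschitzWith hS hL x).trans ?_
  rw [nsmul_eq_mul]
  gcongr

lemma exists_forall_finsum_nearDiagonal_jumpEnergy_le {f : (ι → ℝ) → ℝ} {C : ℝ≥0}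
    (hf : LipschitzWith C f) (hsupp : HasCompactSupport f) (S : Finset ℤ) (r : ℤ) :
    ∃ K : ℝ, ∀ n : ℕ, n ≠ 0 →
      ∑ᶠ x ∈ nearDiagonal ι r, jumpEnergy S (latticeRestriction f n) x ≤
        K * n ^ (Fintype.card ι - 1) / n ^ 2 := by
  obtain ⟨R₀, hR₀⟩ := hsupp.isCompact.isBounded.subset_closedBall 0
  obtain ⟨R, hR⟩ := exists_nat_ge R₀
  have hball : support f ⊆ closedBall 0 R :=
    (subset_tsupport f).trans (hR₀.trans (closedBall_subset_closedBall hR))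
  let ρ : ℕ := S.sup Int.natAbs
  have hS : ∀ σ ∈ S, ‖σ‖ ≤ ρ := fun σ hσ ↦ by
    rw [Int.norm_eq_abs, ← Int.cast_abs, Int.abs_eq_natAbs]
    exact_mod_cast le_sup (f := Int.natAbs) hσ
  refine ⟨Fintype.card ι ^ 2 * (#(Icc (-r) r) * (2 * (R + ρ) + 1) ^ (Fintype.card ι - 1)) *
    (Fintype.card ι * (#S * (C * ρ) ^ 2)), fun n hn ↦ ?_⟩
  have hlattice : support (latticeRestriction f n) ⊆ closedBall 0 (R * n : ℕ) := by
    simpa only [Nat.cast_mul] using support_latticeRestriction_subset hball hn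
  have hside : (2 * ((R * n : ℕ) + ρ) + 1 : ℝ) ≤ (2 * (R + ρ) + 1) * n := by
    have hn₁ : 1 ≤ n := Nat.one_le_iff_ne_zero.2 hn
    norm_cast
    nlinarith
  calc ∑ᶠ x ∈ nearDiagonal ι r, jumpEnergy S (latticeRestriction f n) x
      ≤ Fintype.card ι ^ 2 *
          (#(Icc (-r) r) * (2 * ((R * n : ℕ) + ρ) + 1) ^ (Fintype.card ι - 1)) *
          (Fintype.card ι * (#S * (↑(C / n) * ρ) ^ 2)) :=
        finsum_nearDiagonal_jumpEnergy_le hS r (lipschitzWith_latticeRestriction hf n) hlattice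
    _ ≤ Fintype.card ι ^ 2 *
          (#(Icc (-r) r) * ((2 * (R + ρ) + 1) * n) ^ (Fintype.card ι - 1)) *
          (Fintype.card ι * (#S * (↑(C / n) * ρ) ^ 2)) := by gcongr
    _ = Fintype.card ι ^ 2 *
          (#(Icc (-r) r) * (2 * (R + ρ) + 1) ^ (Fintype.card ι - 1)) *
          (Fintype.card ι * (#S * (C * ρ) ^ 2)) * n ^ (Fintype.card ι - 1) / n ^ 2 := by
        push_cast
        rw [mul_pow (2 * (R + ρ) + 1 : ℝ)]
        ring

theorem near_diagonal_contribution_vanishes_general {f : (ι → ℝ) → ℝ} {C : ℝ≥0}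
    (hf : LipschitzWith C f) (hsupp : HasCompactSupport f) (S : Finset ℤ) (r : ℤ) :
    Tendsto (fun n : ℕ ↦ (n : ℝ) ^ ((2 : ℤ) - (Fintype.card ι : ℤ)) *
        ∑ᶠ x ∈ nearDiagonal ι r, jumpEnergy S (latticeRestriction f n) x)
      atTop (nhds 0) := by
  rcases isEmpty_or_nonempty ι with _ | _
  · simp [nearDiagonal]
  obtain ⟨K, hK⟩ := exists_forall_finsum_nearDiagonal_jumpEnergy_le hf hsupp S r
  refine squeeze_zero' (.of_forall fun n ↦ ?_) ?_ (tendsto_const_div_atTop_nhds_zero_nat K)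
  · exact mul_nonneg (by positivity)
      (finsum_nonneg fun x ↦ finsum_nonneg fun _ ↦ jumpEnergy_nonneg S _ x)
  · filter_upwards [eventually_ne_atTop 0] with n hn
    have hn₀ : (n : ℝ) ≠ 0 := mod_cast hn
    obtain ⟨m, hm⟩ := Nat.exists_eq_add_one.2 (Fintype.card_pos (α := ι))
    calc (n : ℝ) ^ ((2 : ℤ) - (Fintype.card ι : ℤ)) *
          ∑ᶠ x ∈ nearDiagonal ι r, jumpEnergy S (latticeRestriction f n) x
        ≤ (n : ℝ) ^ ((2 : ℤ) - (Fintype.card ι : ℤ)) *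
          (K * n ^ (Fintype.card ι - 1) / n ^ 2) := by gcongr; exact hK n hn
      _ = K / n := by
          rw [hm, Nat.add_sub_cancel, zpow_sub₀ hn₀, zpow_natCast, zpow_ofNat]
          field_simp
          ring

end

/-- **Vanishing of the near-diagonal contributions to the rescaled Dirichlet forms.**
For `k ≥ 2`, `f ∈ C_c^∞(ℝ^k)`, and
`D_k = {x ∈ ℤᵏ : ∃ i ≠ j, |xᵢ − xⱼ| ≤ 1}` the set of configurations with two coordinates
within distance `1`, one has
`n^{2−k} Σ_{x ∈ D_k} Σᵢ Σ_{σ=±1} (f((x+σeᵢ)/n) − f(x/n))² → 0` as `n → ∞`. -/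
theorem near_diagonal_contribution_vanishes (k : ℕ) (hk : 2 ≤ k) (f : (Fin k → ℝ) → ℝ)
    (hsmooth : ContDiff ℝ (⊤ : ℕ∞) f) (hsupp : HasCompactSupport f) :
    Tendsto (fun n : ℕ =>
        (n : ℝ) ^ ((2 : ℤ) - (k : ℤ)) *
          ∑ᶠ x ∈ {x : Fin k → ℤ | ∃ i j, i ≠ j ∧ |x i - x j| ≤ 1},
            ∑ i : Fin k, ∑ σ ∈ ({-1, 1} : Finset ℤ),
              (f (fun l => ((Function.update x i (x i + σ) l : ℤ) : ℝ) / n)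
                - f (fun l => ((x l : ℤ) : ℝ) / n)) ^ 2)
      atTop (nhds 0) := by
  obtain ⟨C, hC⟩ := hsmooth.lipschitzWith_of_hasCompactSupport hsupp (by simp)
  simpa only [Fintype.card_fin] using!
    near_diagonal_contribution_vanishes_general hC hsupp {-1, 1} 1
end
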